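/- Let A_a(y) = (A(y) − A(−y))/2 be the antisymmetric part of A. Then A_a is twice differentiable on ℝ and for every y ∈ ℝ, A_a''(y) + 4y A_a'(y) = (2y² − 1/2)(erf(√(2/3) y) − erf(√2 y)) + √(6/π) y e^{−2y²/3}. -/

import Mathlib

open MeasureTheory Real Filter

/-- The error function `erf`. -/
noncomputable def erf (x : ℝ) : ℝ := (2 / Real.sqrt Real.pi) * ∫ t in (0 : ℝ)..x, Real.exp (-t ^ 2)

/-- The complementary error function `erfc`. -/
noncomputable def erfc (x : ℝ) : ℝ := 1 - erf x

noncomputable def A₁ (y : ℝ) : ℝ :=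
  -(1 / (2 * Real.sqrt (2 * Real.pi))) *
    ∫ t in Set.Ioi (0 : ℝ), Real.exp (-2 * (t - y) ^ 2) * erfc t

noncomputable def A₂ (y : ℝ) : ℝ :=
  (1 / Real.sqrt (2 * Real.pi)) *
    ∫ t in Set.Ioi (0 : ℝ),
      Real.exp (-2 * (t - y) ^ 2) * t * (Real.exp (-t ^ 2) / Real.sqrt Real.pi - t * erfc t)

noncomputable def A₃ (y : ℝ) : ℝ :=
  (1 / 4) * (1 + erf (Real.sqrt 2 * y)) *
    (-(y * Real.exp (-2 * y ^ 2)) / Real.sqrt (2 * Real.pi) +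
      (1 / 4 + y ^ 2) * (1 - erf (Real.sqrt 2 * y)))

noncomputable def A₄ (y : ℝ) : ℝ :=
  -(1 / Real.sqrt (2 * Real.pi)) *
    ∫ t₁ in Set.Ioi (0 : ℝ), ∫ t₂ in Set.Ioo (0 : ℝ) t₁,
      (1 / (t₁ - t₂)) *
        (Real.exp (-2 * (t₁ - y) ^ 2) * (erf (t₁ - t₂) + erf (Real.sqrt 2 * (t₂ - y))) +
          Real.exp (-2 * (t₂ - y) ^ 2) * (erf (t₁ - t₂) - erf (Real.sqrt 2 * (t₁ - y))))

noncomputable def A (y : ℝ) : ℝ := A₁ y + A₂ y + A₃ y + A₄ y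

/-- The antisymmetric part of `A`. -/
noncomputable def Aa (y : ℝ) : ℝ := (A y - A (-y)) / 2

/-!
Integration by parts against the weight `e ^ (-2 (t - y) ^ 2)` reduces `A₁` and `A₂` to half-line
Gaussian integrals of `erfc` and `e ^ (-t ^ 2)`. In the odd part two half-lines combine to the whole
line, so the odd part of `A₁ + A₂ + A₃` is an explicit expression in `erf` and Gaussians.

In the coordinates `r = t₁ - t₂`, `z = y - t₂` the double integral `A₄` becomes a multiple of
`∫ z in Iic y, e ^ (-2 z ^ 2) K(z)`, where `K(z)` is the integral over `r > 0` of a kernel with a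
factor `1 / r`. Hence `A₄'' + 4 y A₄'` is a multiple of `e ^ (-2 y ^ 2) K'(y)`. Differentiating the
kernel in `z` cancels the factor `1 / r`, and what remains is again a combination of half-line
Gaussian integrals, whose odd part is explicit.
-/

open scoped Topology

/-! ### The error function -/

lemma hasDerivAt_exp_neg_mul_sq (b x : ℝ) :
    HasDerivAt (fun x ↦ rexp (-b * x ^ 2)) (-(2 * b * x * rexp (-b * x ^ 2))) x := by
  convert! ((hasDerivAt_pow 2 x).const_mul (-b)).exp using 1
  push_cast
  ring

lemma hasDerivAt_exp_neg_sq (x : ℝ) :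
    HasDerivAt (fun x ↦ rexp (-x ^ 2)) (-(2 * x * rexp (-x ^ 2))) x := by
  simpa using hasDerivAt_exp_neg_mul_sq 1 x

lemma exp_neg_sq_le_one (x : ℝ) : rexp (-x ^ 2) ≤ 1 :=
  exp_le_one_iff.2 (neg_nonpos.2 (sq_nonneg x))

lemma integrable_exp_neg_sq : Integrable fun x : ℝ ↦ rexp (-x ^ 2) := by
  simpa using integrable_exp_neg_mul_sq one_pos

lemma two_div_sqrt_pi_le_two : 2 / √π ≤ 2 :=
  div_le_self zero_le_two (one_le_sqrt.2 (by linarith [pi_gt_three]))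

lemma hasDerivAt_erf (x : ℝ) : HasDerivAt erf (2 / √π * rexp (-x ^ 2)) x := by
  have hcont : Continuous fun t : ℝ ↦ rexp (-t ^ 2) := by fun_prop
  exact (hcont.integral_hasStrictDerivAt 0 x).hasDerivAt.const_mul _

lemma hasDerivAt_erf_const_mul (c x : ℝ) :
    HasDerivAt (fun x ↦ erf (c * x)) (2 / √π * c * rexp (-(c * x) ^ 2)) x := by
  convert! (hasDerivAt_erf (c * x)).comp x (hasDerivAt_const_mul c) using 1
  ring

lemma hasDerivAt_erfc (x : ℝ) : HasDerivAt erfc (-(2 / √π * rexp (-x ^ 2))) x :=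
  (hasDerivAt_erf x).const_sub 1

@[fun_prop]
lemma continuous_erf : Continuous erf :=
  continuous_iff_continuousAt.2 fun x ↦ (hasDerivAt_erf x).continuousAt

@[fun_prop]
lemma measurable_erf : Measurable erf := continuous_erf.measurable

@[fun_prop]
lemma measurable_erfc : Measurable erfc := measurable_erf.const_sub 1

lemma erf_zero : erf 0 = 0 := by simp [erf]

lemma erfc_zero : erfc 0 = 1 := by simp [erfc, erf_zero]

lemma erf_neg (x : ℝ) : erf (-x) = -erf x := by
  have h := intervalIntegral.integral_comp_neg (a := 0) (b := x) fun t : ℝ ↦ rexp (-t ^ 2)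
  simp only [neg_sq, neg_zero] at h
  rw [erf, erf, intervalIntegral.integral_symm, ← h, mul_neg]

lemma abs_deriv_erf_le (x : ℝ) : |2 / √π * rexp (-x ^ 2)| ≤ 2 := by
  rw [abs_of_pos (by positivity)]
  simpa using mul_le_mul two_div_sqrt_pi_le_two (exp_neg_sq_le_one x) (exp_pos _).le zero_le_two

lemma abs_erf_sub_erf_le (x y : ℝ) : |erf x - erf y| ≤ 2 * |x - y| :=
  convex_univ.norm_image_sub_le_of_norm_hasDerivWithin_le
    (fun z _ ↦ (hasDerivAt_erf z).hasDerivWithinAt) (fun z _ ↦ abs_deriv_erf_le z) trivial trivial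

lemma abs_erf_le_two_mul_abs (x : ℝ) : |erf x| ≤ 2 * |x| := by
  simpa [erf_zero] using abs_erf_sub_erf_le x 0

lemma erfc_eq_integral_Ioi (x : ℝ) : erfc x = 2 / √π * ∫ t in Set.Ioi x, rexp (-t ^ 2) := by
  have hsplit := intervalIntegral.integral_interval_add_Ioi (a := 0) (b := x)
    integrable_exp_neg_sq.integrableOn integrable_exp_neg_sq.integrableOn
  have htotal : ∫ t in Set.Ioi (0 : ℝ), rexp (-t ^ 2) = √π / 2 := by
    simpa using integral_gaussian_Ioi 1
  have hone : 2 / √π * (√π / 2) = 1 := by field_simp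
  rw [erfc, erf, ← hone, ← htotal, ← hsplit]
  ring

lemma erfc_nonneg (x : ℝ) : 0 ≤ erfc x := by
  rw [erfc_eq_integral_Ioi]
  positivity

lemma erfc_le_exp_one_sub (x : ℝ) : erfc x ≤ 2 * rexp (1 - x) := by
  have hint : ∫ t in Set.Ioi x, rexp (-t ^ 2) ≤ ∫ t in Set.Ioi x, rexp 1 * rexp (-t) := by
    refine integral_mono integrable_exp_neg_sq.integrableOn
      ((integrableOn_exp_neg_Ioi x).const_mul _) fun t ↦ ?_
    rw [← exp_add]
    exact exp_le_exp.2 (by nlinarith [sq_nonneg (t - 1 / 2)])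
  rw [integral_const_mul, integral_exp_neg_Ioi, ← exp_add, ← sub_eq_add_neg] at hint
  rw [erfc_eq_integral_Ioi]
  exact mul_le_mul two_div_sqrt_pi_le_two hint (by positivity) zero_le_two

lemma abs_erf_le_one (x : ℝ) : |erf x| ≤ 1 := by
  have hpos := erfc_nonneg x
  have hneg := erfc_nonneg (-x)
  rw [erfc, erf_neg] at hneg
  rw [erfc] at hpos
  exact abs_le.2 ⟨by linarith, by linarith⟩

lemma abs_erf_sub_erf_le_two (x y : ℝ) : |erf x - erf y| ≤ 2 :=
  (abs_sub _ _).trans (by linarith [abs_erf_le_one x, abs_erf_le_one y])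

lemma abs_erfc_le_two (x : ℝ) : |erfc x| ≤ 2 := by
  rw [abs_of_nonneg (erfc_nonneg x), erfc]
  linarith [abs_le.1 (abs_erf_le_one x)]

lemma tendsto_erf_atTop : Tendsto erf atTop (𝓝 1) := by
  have hexp : Tendsto (fun x ↦ 2 * rexp (1 - x)) atTop (𝓝 0) := by
    simpa [sub_eq_add_neg] using (tendsto_exp_comp_nhds_zero.2
      (tendsto_atBot_add_const_left _ 1 tendsto_neg_atTop_atBot)).const_mul 2
  have herfc : Tendsto erfc atTop (𝓝 0) := squeeze_zero erfc_nonneg erfc_le_exp_one_sub hexp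
  simpa [erfc] using herfc.const_sub 1

/-! ### Gaussian integrals on the line -/

lemma hasDerivAt_gaussian (b y t : ℝ) :
    HasDerivAt (fun t ↦ rexp (-b * (t - y) ^ 2))
      (-(2 * b * (t - y) * rexp (-b * (t - y) ^ 2))) t :=
  (hasDerivAt_exp_neg_mul_sq b (t - y)).comp_sub_const t y

lemma integrable_gaussian_mul_pow_mul {b : ℝ} (hb : 0 < b) (y : ℝ) (n : ℕ) {u : ℝ → ℝ} {M : ℝ}
    (hu : Measurable u) (hM : ∀ t, |u t| ≤ M) :
    Integrable fun t ↦ rexp (-b * (t - y) ^ 2) * (t ^ n * u t) := by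
  have hcentered (m : ℕ) : Integrable fun s : ℝ ↦ s ^ m * rexp (-b * s ^ 2) := by
    simpa using integrable_rpow_mul_exp_neg_mul_sq hb
      (neg_one_lt_zero.trans_le (Nat.cast_nonneg (α := ℝ) m))
  have hshifted : Integrable fun s : ℝ ↦ (s + y) ^ n * rexp (-b * s ^ 2) := by
    simp only [add_pow, Finset.sum_mul]
    refine integrable_finsetSum _ fun m _ ↦ ?_
    convert! (hcentered m).const_mul (y ^ (n - m) * n.choose m) using 2
    ring
  refine ((hshifted.comp_sub_right y).mul_bdd hu.aestronglyMeasurable (ae_of_all _ hM)).congr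
    (ae_of_all _ fun t ↦ ?_)
  simp only [sub_add_cancel]
  ring

lemma integrable_gaussian_mul {b : ℝ} (hb : 0 < b) (y : ℝ) {u : ℝ → ℝ} {M : ℝ}
    (hu : Measurable u) (hM : ∀ t, |u t| ≤ M) :
    Integrable fun t ↦ rexp (-b * (t - y) ^ 2) * u t := by
  simpa using integrable_gaussian_mul_pow_mul hb y 0 hu hM

lemma integrable_gaussian {b : ℝ} (hb : 0 < b) (y : ℝ) :
    Integrable fun t ↦ rexp (-b * (t - y) ^ 2) :=
  (integrable_exp_neg_mul_sq hb).comp_sub_right y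

lemma integral_gaussian_mul_exp_neg_sq {b : ℝ} (hb : b + 1 ≠ 0) (y : ℝ) :
    ∫ t, rexp (-b * (t - y) ^ 2) * rexp (-t ^ 2) =
      √(π / (b + 1)) * rexp (-(b / (b + 1) * y ^ 2)) := by
  have hsquare (t : ℝ) : rexp (-b * (t - y) ^ 2) * rexp (-t ^ 2) =
      rexp (-(b + 1) * (t - b / (b + 1) * y) ^ 2) * rexp (-(b / (b + 1) * y ^ 2)) := by
    rw [← exp_add, ← exp_add]
    congr 1
    field_simp
    ring
  simp_rw [hsquare]
  rw [integral_mul_const, integral_sub_right_eq_self fun t : ℝ ↦ rexp (-(b + 1) * t ^ 2),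
    integral_gaussian]

lemma hasDerivAt_integral_mul_comp_add {φ f f' : ℝ → ℝ} {M C : ℝ} (hφ : Integrable φ)
    (hf : ∀ x, HasDerivAt f (f' x) x) (hM : ∀ x, |f x| ≤ M) (hC : ∀ x, |f' x| ≤ C) (y : ℝ) :
    HasDerivAt (fun y ↦ ∫ s, φ s * f (s + y)) (∫ s, φ s * f' (s + y)) y := by
  have hf_meas : Measurable f :=
    (continuous_iff_continuousAt.2 fun x ↦ (hf x).continuousAt).measurable
  have hf'_meas : Measurable f' := by
    simpa only [funext fun x ↦ (hf x).deriv] using measurable_deriv f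
  have hshift_meas {g : ℝ → ℝ} (hg : Measurable g) (y : ℝ) :
      AEStronglyMeasurable fun s ↦ g (s + y) :=
    (hg.comp (measurable_add_const y)).aestronglyMeasurable
  refine (hasDerivAt_integral_of_dominated_loc_of_deriv_le
    (F := fun y s ↦ φ s * f (s + y)) (F' := fun y s ↦ φ s * f' (s + y))
    (bound := fun s ↦ |φ s| * C) univ_mem
    (Eventually.of_forall fun y ↦ hφ.aestronglyMeasurable.mul (hshift_meas hf_meas y))
    (hφ.mul_bdd (hshift_meas hf_meas y) (ae_of_all _ fun s ↦ hM (s + y)))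
    (hφ.aestronglyMeasurable.mul (hshift_meas hf'_meas y)) (ae_of_all _ fun s z _ ↦ ?_)
    (hφ.abs.mul_const C) (ae_of_all _ fun s z _ ↦ ?_)).2
  · rw [norm_mul, norm_eq_abs, norm_eq_abs]
    gcongr
    exact hC _
  · exact ((hf (s + z)).comp_const_add s z).const_mul _

lemma integral_gaussian_mul_eq_integral_mul_comp_add (b y : ℝ) (f : ℝ → ℝ) :
    ∫ t, rexp (-b * (t - y) ^ 2) * f t = ∫ s, rexp (-b * s ^ 2) * f (s + y) := by
  rw [← integral_sub_right_eq_self (fun s ↦ rexp (-b * s ^ 2) * f (s + y)) y]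
  simp only [sub_add_cancel]

/-- Both sides are odd in `y` and have the same derivative. -/
lemma integral_gaussian_mul_erf {b : ℝ} (hb : 0 < b) (y : ℝ) :
    ∫ t, rexp (-b * (t - y) ^ 2) * erf t = √(π / b) * erf (√(b / (b + 1)) * y) := by
  set c := √(b / (b + 1)) with hc
  have hc_sq : c ^ 2 = b / (b + 1) := sq_sqrt (by positivity)
  have hsqrt : √(π / b) * c = √(π / (b + 1)) := by
    rw [hc, ← sqrt_mul (by positivity)]
    congr 1
    field_simp
  have hderiv (y : ℝ) : HasDerivAt
      (fun y ↦ (∫ s, rexp (-b * s ^ 2) * erf (s + y)) - √(π / b) * erf (c * y)) 0 y := by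
    convert! (hasDerivAt_integral_mul_comp_add (integrable_exp_neg_mul_sq hb) hasDerivAt_erf
      abs_erf_le_one abs_deriv_erf_le y).sub ((hasDerivAt_erf_const_mul c y).const_mul _) using 1
    simp_rw [mul_left_comm _ (2 / √π)]
    rw [integral_const_mul,
      ← integral_gaussian_mul_eq_integral_mul_comp_add b y fun t ↦ rexp (-t ^ 2),
      integral_gaussian_mul_exp_neg_sq (by positivity), mul_pow, hc_sq, ← hsqrt]
    ring
  have hconst := is_const_of_deriv_eq_zero (fun y ↦ (hderiv y).differentiableAt)
    (fun y ↦ (hderiv y).deriv) y 0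
  have hodd : ∫ s, rexp (-b * s ^ 2) * erf s = 0 := by
    have hneg := integral_neg_eq_self (fun s ↦ rexp (-b * s ^ 2) * erf s) volume
    simp only [erf_neg, neg_sq, mul_neg, integral_neg] at hneg
    linarith
  simp only [add_zero, mul_zero, erf_zero, hodd, sub_zero] at hconst
  rw [integral_gaussian_mul_eq_integral_mul_comp_add]
  exact sub_eq_zero.1 hconst

/-! ### Gaussian integrals on the half-line -/

/-- The integral of `f` over `(0, ∞)` against the Gaussian weight `e ^ (-b (t - y) ^ 2)`, as a
function of the centre `y`. -/
noncomputable def halfGaussian (b : ℝ) (f : ℝ → ℝ) (y : ℝ) : ℝ :=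
  ∫ t in Set.Ioi 0, rexp (-b * (t - y) ^ 2) * f t

lemma halfGaussian_add_halfGaussian_comp_neg {b y : ℝ} {f : ℝ → ℝ}
    (hf : Integrable fun t ↦ rexp (-b * (t - y) ^ 2) * f t) :
    halfGaussian b f y + halfGaussian b (fun t ↦ f (-t)) (-y) =
      ∫ t, rexp (-b * (t - y) ^ 2) * f t := by
  have hreflect := integral_comp_neg_Ioi 0 fun t ↦ rexp (-b * (t - y) ^ 2) * f t
  rw [neg_zero] at hreflect
  rw [← intervalIntegral.integral_Iic_add_Ioi hf.integrableOn hf.integrableOn, ← hreflect, add_comm,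
    halfGaussian, halfGaussian]
  congr 3 with t
  ring_nf

/-- Integration by parts: `-2b (t - y)` is the logarithmic derivative of the weight. -/
lemma halfGaussian_id_mul {b y : ℝ} (hb : b ≠ 0) {f f' : ℝ → ℝ}
    (hderiv : ∀ t ∈ Set.Ici 0, HasDerivAt f (f' t) t)
    (hf : IntegrableOn (fun t ↦ rexp (-b * (t - y) ^ 2) * f t) (Set.Ioi 0))
    (htf : IntegrableOn (fun t ↦ rexp (-b * (t - y) ^ 2) * (t * f t)) (Set.Ioi 0))
    (hf' : IntegrableOn (fun t ↦ rexp (-b * (t - y) ^ 2) * f' t) (Set.Ioi 0)) :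
    halfGaussian b (fun t ↦ t * f t) y = y * halfGaussian b f y +
      (rexp (-b * y ^ 2) * f 0 + halfGaussian b f' y) / (2 * b) := by
  have hprod (t : ℝ) (ht : t ∈ Set.Ici 0) : HasDerivAt (fun t ↦ rexp (-b * (t - y) ^ 2) * f t)
      (-(2 * b) * (rexp (-b * (t - y) ^ 2) * (t * f t)) +
        2 * b * y * (rexp (-b * (t - y) ^ 2) * f t) + rexp (-b * (t - y) ^ 2) * f' t) t := by
    convert! (hasDerivAt_gaussian b y t).mul (hderiv t ht) using 1
    ring
  have htf_int := htf.const_mul (-(2 * b))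
  have hf_int := hf.const_mul (2 * b * y)
  have hsum_int := (htf_int.add hf_int).add hf'
  have hparts := integral_Ioi_of_hasDerivAt_of_tendsto' hprod hsum_int
    (tendsto_zero_of_hasDerivAt_of_integrableOn_Ioi
      (fun t ht ↦ hprod t (Set.Ioi_subset_Ici_self ht)) hsum_int hf)
  rw [integral_add (by exact htf_int.add hf_int) hf', integral_add htf_int hf_int,
    integral_const_mul, integral_const_mul, zero_sub, zero_sub, neg_sq] at hparts
  change -(2 * b) * halfGaussian b (fun t ↦ t * f t) y + 2 * b * y * halfGaussian b f y
    + halfGaussian b f' y = _ at hparts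
  rw [← sub_eq_iff_eq_add', eq_div_iff (mul_ne_zero two_ne_zero hb)]
  linear_combination -hparts

lemma halfGaussian_one {b : ℝ} (hb : 0 < b) (y : ℝ) :
    halfGaussian b 1 y = √(π / b) / 2 * (1 + erf (√b * y)) := by
  have hprimitive (t : ℝ) : HasDerivAt (fun t ↦ √(π / b) / 2 * erf (√b * (t - y)))
      (rexp (-b * (t - y) ^ 2)) t := by
    convert! ((hasDerivAt_erf_const_mul √b (t - y)).comp_sub_const t y).const_mul (√(π / b) / 2)
      using 1
    rw [sqrt_div' _ hb.le, mul_pow, sq_sqrt hb.le, ← neg_mul]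
    field_simp
  have hlim : Tendsto (fun t ↦ √(π / b) / 2 * erf (√b * (t - y))) atTop (𝓝 (√(π / b) / 2 * 1)) :=
    (tendsto_erf_atTop.comp ((tendsto_atTop_add_const_right _ (-y) tendsto_id).const_mul_atTop
      (sqrt_pos.2 hb))).const_mul _
  have hFTC := integral_Ioi_of_hasDerivAt_of_tendsto' (a := 0) (fun t _ ↦ hprimitive t)
    (integrable_gaussian hb y).integrableOn hlim
  rw [zero_sub, mul_neg, erf_neg] at hFTC
  simp only [halfGaussian, Pi.one_apply, mul_one, hFTC]
  ring

lemma halfGaussian_erf {b : ℝ} (hb : 0 < b) (y : ℝ) :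
    halfGaussian b erf y = halfGaussian b 1 y - halfGaussian b erfc y := by
  rw [halfGaussian, halfGaussian, halfGaussian, ← integral_sub
    (integrable_gaussian_mul hb y measurable_one fun _ ↦ abs_one.le).integrableOn
    (integrable_gaussian_mul hb y measurable_erfc abs_erfc_le_two).integrableOn]
  simp only [erfc, Pi.one_apply, ← mul_sub, sub_sub_cancel]

lemma halfGaussian_erf_sub_neg {b : ℝ} (hb : 0 < b) (y : ℝ) :
    halfGaussian b erf y - halfGaussian b erf (-y) = √(π / b) * erf (√(b / (b + 1)) * y) := by
  rw [← integral_gaussian_mul_erf hb, ← halfGaussian_add_halfGaussian_comp_neg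
    (integrable_gaussian_mul hb y measurable_erf abs_erf_le_one)]
  simp only [halfGaussian, erf_neg, mul_neg, integral_neg, sub_eq_add_neg]

lemma halfGaussian_erfc_sub_neg {b : ℝ} (hb : 0 < b) (y : ℝ) :
    halfGaussian b erfc y - halfGaussian b erfc (-y) =
      √(π / b) * (erf (√b * y) - erf (√(b / (b + 1)) * y)) := by
  have hodd := halfGaussian_erf_sub_neg hb y
  rw [halfGaussian_erf hb, halfGaussian_erf hb, halfGaussian_one hb, halfGaussian_one hb, mul_neg,
    erf_neg] at hodd
  linear_combination -hodd

lemma halfGaussian_exp_neg_sq_add_neg {b : ℝ} (hb : 0 < b) (y : ℝ) :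
    halfGaussian b (fun t ↦ rexp (-t ^ 2)) y + halfGaussian b (fun t ↦ rexp (-t ^ 2)) (-y) =
      √(π / (b + 1)) * rexp (-(b / (b + 1) * y ^ 2)) := by
  rw [← integral_gaussian_mul_exp_neg_sq (by positivity), ← halfGaussian_add_halfGaussian_comp_neg
    (integrable_gaussian_mul hb y (by fun_prop) fun t ↦
      (abs_exp _).trans_le (exp_neg_sq_le_one t))]
  simp only [neg_sq]

lemma halfGaussian_const_mul (b c : ℝ) (f : ℝ → ℝ) (y : ℝ) :
    halfGaussian b (fun t ↦ c * f t) y = c * halfGaussian b f y := by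
  simp only [halfGaussian, mul_left_comm _ c, integral_const_mul]

lemma integrable_gaussian_mul_pow_mul_exp_neg_sq {b : ℝ} (hb : 0 < b) (y : ℝ) (n : ℕ) :
    Integrable fun t ↦ rexp (-b * (t - y) ^ 2) * (t ^ n * rexp (-t ^ 2)) :=
  integrable_gaussian_mul_pow_mul hb y n (by fun_prop) fun t ↦
    (abs_exp _).trans_le (exp_neg_sq_le_one t)

lemma integrable_gaussian_mul_pow_mul_erfc {b : ℝ} (hb : 0 < b) (y : ℝ) (n : ℕ) :
    Integrable fun t ↦ rexp (-b * (t - y) ^ 2) * (t ^ n * erfc t) :=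
  integrable_gaussian_mul_pow_mul hb y n measurable_erfc abs_erfc_le_two

lemma halfGaussian_id_mul_exp_neg_sq {b : ℝ} (hb : 0 < b) (y : ℝ) :
    halfGaussian b (fun t ↦ t * rexp (-t ^ 2)) y =
      (2 * b * y * halfGaussian b (fun t ↦ rexp (-t ^ 2)) y + rexp (-b * y ^ 2)) /
        (2 * (b + 1)) := by
  have hexp := integrable_gaussian_mul_pow_mul_exp_neg_sq hb y 0
  have hid := integrable_gaussian_mul_pow_mul_exp_neg_sq hb y 1
  simp only [pow_zero, pow_one, one_mul] at hexp hid
  have hderiv (t : ℝ) : HasDerivAt (fun t ↦ rexp (-t ^ 2)) (-2 * (t * rexp (-t ^ 2))) t := by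
    convert! hasDerivAt_exp_neg_sq t using 1
    ring
  have hparts := halfGaussian_id_mul hb.ne' (fun t _ ↦ hderiv t) hexp.integrableOn
    hid.integrableOn ((hid.const_mul (-2)).congr (ae_of_all _ fun t ↦ by ring)).integrableOn
  simp only [halfGaussian_const_mul, zero_pow two_ne_zero, neg_zero, exp_zero] at hparts
  field_simp at hparts ⊢
  linear_combination hparts

lemma halfGaussian_id_mul_erfc {b : ℝ} (hb : 0 < b) (y : ℝ) :
    halfGaussian b (fun t ↦ t * erfc t) y = y * halfGaussian b erfc y +
      (rexp (-b * y ^ 2) - 2 / √π * halfGaussian b (fun t ↦ rexp (-t ^ 2)) y) / (2 * b) := by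
  have hexp := (integrable_gaussian_mul_pow_mul_exp_neg_sq hb y 0).const_mul (-(2 / √π))
  have herfc := integrable_gaussian_mul_pow_mul_erfc hb y 0
  have hid := integrable_gaussian_mul_pow_mul_erfc hb y 1
  simp only [pow_zero, pow_one, one_mul] at hexp herfc hid
  have hderiv (t : ℝ) : HasDerivAt erfc (-(2 / √π) * rexp (-t ^ 2)) t := by
    simpa only [neg_mul] using hasDerivAt_erfc t
  rw [halfGaussian_id_mul hb.ne' (fun t _ ↦ hderiv t) herfc.integrableOn hid.integrableOn
    (hexp.congr (ae_of_all _ fun t ↦ by ring)).integrableOn, halfGaussian_const_mul, erfc_zero]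
  ring

lemma halfGaussian_id_mul_id_mul_erfc {b : ℝ} (hb : 0 < b) (y : ℝ) :
    halfGaussian b (fun t ↦ t * (t * erfc t)) y = y * halfGaussian b (fun t ↦ t * erfc t) y +
      (halfGaussian b erfc y - 2 / √π * halfGaussian b (fun t ↦ t * rexp (-t ^ 2)) y) /
        (2 * b) := by
  have hid_exp := (integrable_gaussian_mul_pow_mul_exp_neg_sq hb y 1).const_mul (2 / √π)
  have herfc := integrable_gaussian_mul_pow_mul_erfc hb y 0
  have hid := integrable_gaussian_mul_pow_mul_erfc hb y 1
  have hsq := integrable_gaussian_mul_pow_mul_erfc hb y 2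
  simp only [pow_zero, pow_one, one_mul] at hid_exp herfc hid
  have hderiv (t : ℝ) : HasDerivAt (fun t ↦ t * erfc t)
      (erfc t - 2 / √π * (t * rexp (-t ^ 2))) t := by
    convert! (hasDerivAt_id t).mul (hasDerivAt_erfc t) using 1
    simp only [id]
    ring
  have hsplit : halfGaussian b (fun t ↦ erfc t - 2 / √π * (t * rexp (-t ^ 2))) y =
      halfGaussian b erfc y - 2 / √π * halfGaussian b (fun t ↦ t * rexp (-t ^ 2)) y := by
    simp only [halfGaussian, ← integral_const_mul]
    rw [← integral_sub herfc.integrableOn hid_exp.integrableOn]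
    congr with t
    ring
  rw [halfGaussian_id_mul hb.ne' (fun t _ ↦ hderiv t) hid.integrableOn
    (hsq.congr (ae_of_all _ fun t ↦ by ring)).integrableOn
    ((herfc.sub hid_exp).congr (ae_of_all _ fun t ↦ by dsimp; ring)).integrableOn, hsplit]
  ring

/-! ### Odd and even parts -/

/-- The odd part of `f`. -/
noncomputable def oddPart (f : ℝ → ℝ) (y : ℝ) : ℝ := (f y - f (-y)) / 2

/-- The even part of `f`; it is the derivative of the odd part of a primitive of `f`. -/
noncomputable def evenPart (f : ℝ → ℝ) (y : ℝ) : ℝ := (f y + f (-y)) / 2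

lemma hasDerivAt_oddPart {f f' : ℝ → ℝ} (hf : ∀ x, HasDerivAt f (f' x) x) (y : ℝ) :
    HasDerivAt (oddPart f) (evenPart f' y) y := by
  convert! ((hf y).sub ((hf (-y)).comp y (hasDerivAt_neg y))).div_const 2 using 1
  rw [evenPart, mul_neg_one, sub_neg_eq_add]

lemma hasDerivAt_evenPart {f f' : ℝ → ℝ} (hf : ∀ x, HasDerivAt f (f' x) x) (y : ℝ) :
    HasDerivAt (evenPart f) (oddPart f' y) y := by
  convert! ((hf y).add ((hf (-y)).comp y (hasDerivAt_neg y))).div_const 2 using 1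
  rw [oddPart, mul_neg_one, sub_eq_add_neg]

/-! ### The terms `A₁`, `A₂` and `A₃` -/

lemma A₁_eq_halfGaussian (y : ℝ) : A₁ y = -(1 / (2 * √(2 * π))) * halfGaussian 2 erfc y := rfl

lemma A₂_eq_halfGaussian (y : ℝ) : A₂ y = 1 / √(2 * π) *
    (halfGaussian 2 (fun t ↦ t * rexp (-t ^ 2)) y / √π -
      halfGaussian 2 (fun t ↦ t * (t * erfc t)) y) := by
  have hexp := (integrable_gaussian_mul_pow_mul_exp_neg_sq two_pos y 1).div_const √π
  have herfc := integrable_gaussian_mul_pow_mul_erfc two_pos y 2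
  rw [A₂, halfGaussian, halfGaussian, ← integral_div]
  simp only [pow_one, sq (_ : ℝ), mul_assoc] at hexp herfc ⊢
  rw [← integral_sub hexp.integrableOn herfc.integrableOn]
  congr with t
  ring

lemma A₂_eq (y : ℝ) : A₂ y = 1 / √(2 * π) *
    (3 * y / (2 * √π) * halfGaussian 2 (fun t ↦ rexp (-t ^ 2)) y
      - (y ^ 2 + 1 / 4) * halfGaussian 2 erfc y
      + (1 / (4 * √π) - y / 4) * rexp (-2 * y ^ 2)) := by
  rw [A₂_eq_halfGaussian, halfGaussian_id_mul_id_mul_erfc two_pos, halfGaussian_id_mul_erfc two_pos,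
    halfGaussian_id_mul_exp_neg_sq two_pos]
  ring

lemma oddPart_A₃ (y : ℝ) : oddPart A₃ y = -(y * rexp (-2 * y ^ 2)) / (4 * √(2 * π)) := by
  simp only [oddPart, A₃, mul_neg, erf_neg, neg_sq]
  ring

/-- The combination of error functions that occurs in the odd part of every half-line integral
against the weight `e ^ (-2 (t - y) ^ 2)` below. -/
noncomputable def erfDiff (y : ℝ) : ℝ := erf (√(2 / 3) * y) - erf (√2 * y)

/-- The odd part of `A₁ + A₂ + A₃`, in closed form. -/
noncomputable def explicitPart (y : ℝ) : ℝ :=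
  (y ^ 2 + 3 / 4) / 4 * erfDiff y +
    1 / √(2 * π) * (√3 / 4 * y * rexp (-2 * y ^ 2 / 3) - y / 2 * rexp (-2 * y ^ 2))

lemma halfGaussian_two_erfc_sub_neg (y : ℝ) :
    halfGaussian 2 erfc y - halfGaussian 2 erfc (-y) = -√(2 * π) / 2 * erfDiff y := by
  have hsqrt : √(π / 2) = √(2 * π) / 2 := by
    rw [sqrt_div' _ zero_le_two, sqrt_mul zero_le_two]
    field_simp
    norm_num
  rw [halfGaussian_erfc_sub_neg two_pos, hsqrt, erfDiff]
  norm_num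
  ring

lemma halfGaussian_two_exp_neg_sq_add_neg (y : ℝ) :
    halfGaussian 2 (fun t ↦ rexp (-t ^ 2)) y + halfGaussian 2 (fun t ↦ rexp (-t ^ 2)) (-y) =
      √3 * √π / 3 * rexp (-2 * y ^ 2 / 3) := by
  have hsqrt : √(π / 3) = √3 * √π / 3 := by
    rw [sqrt_div' _ zero_le_three]
    field_simp
    norm_num
  rw [halfGaussian_exp_neg_sq_add_neg two_pos, two_add_one_eq_three, hsqrt]
  ring_nf

lemma Aa_eq_explicitPart_add_oddPart_A₄ (y : ℝ) : Aa y = explicitPart y + oddPart A₄ y := by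
  have hsplit : Aa y = oddPart A₁ y + oddPart A₂ y + oddPart A₃ y + oddPart A₄ y := by
    simp only [Aa, A, oddPart]
    ring
  have hκ : 1 / √(2 * π) * √(2 * π) = 1 := by field_simp
  have hπ : 1 / √π * √π = 1 := by field_simp
  rw [hsplit, oddPart_A₃, oddPart, oddPart, A₁_eq_halfGaussian, A₁_eq_halfGaussian, A₂_eq, A₂_eq,
    explicitPart, neg_sq]
  linear_combination
    -(y ^ 2 + 3 / 4) / (2 * √(2 * π)) * halfGaussian_two_erfc_sub_neg y
    + 3 * y / (4 * √π * √(2 * π)) * halfGaussian_two_exp_neg_sq_add_neg y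
    + (y ^ 2 + 3 / 4) / 4 * erfDiff y * hκ
    + √3 * y / (4 * √(2 * π)) * rexp (-2 * y ^ 2 / 3) * hπ

lemma hasDerivAt_erfDiff (y : ℝ) : HasDerivAt erfDiff
    (4 / √(2 * π) * (√3 / 3 * rexp (-2 * y ^ 2 / 3) - rexp (-2 * y ^ 2))) y := by
  have hsqrt : √(2 / 3) = √2 * √3 / 3 := by
    rw [sqrt_div' _ zero_le_three]
    field_simp
    norm_num
  convert! (hasDerivAt_erf_const_mul √(2 / 3) y).sub (hasDerivAt_erf_const_mul √2 y) using 1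
  rw [mul_pow, mul_pow, sq_sqrt (by positivity), sq_sqrt zero_le_two, hsqrt, sqrt_mul zero_le_two]
  field_simp
  rw [sq_sqrt zero_le_two]
  ring_nf

lemma hasDerivAt_exp_neg_two_mul_sq_div_three (y : ℝ) :
    HasDerivAt (fun y ↦ rexp (-2 * y ^ 2 / 3)) (-(4 / 3 * y * rexp (-2 * y ^ 2 / 3))) y := by
  convert! hasDerivAt_exp_neg_mul_sq (2 / 3) y using 1
  · ext y
    ring_nf
  · ring_nf

/-- The derivative of `explicitPart`. -/
noncomputable def explicitPartDeriv (y : ℝ) : ℝ :=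
  y / 2 * erfDiff y +
    1 / √(2 * π) * (√3 / 2 * rexp (-2 * y ^ 2 / 3) + (y ^ 2 - 5 / 4) * rexp (-2 * y ^ 2))

lemma hasDerivAt_explicitPart (y : ℝ) : HasDerivAt explicitPart (explicitPartDeriv y) y := by
  have hpoly : HasDerivAt (fun y : ℝ ↦ (y ^ 2 + 3 / 4) / 4) (y / 2) y := by
    convert! ((hasDerivAt_pow 2 y).add_const (3 / 4)).div_const 4 using 1
    norm_num
    ring
  have hwide := ((hasDerivAt_id y).const_mul (√3 / 4)).mul
    (hasDerivAt_exp_neg_two_mul_sq_div_three y)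
  have hnarrow := ((hasDerivAt_id y).div_const 2).mul (hasDerivAt_exp_neg_mul_sq 2 y)
  convert! (hpoly.mul (hasDerivAt_erfDiff y)).add
    ((hwide.sub hnarrow).const_mul (1 / √(2 * π))) using 1
  simp only [explicitPartDeriv, id]
  ring

lemma hasDerivAt_explicitPartDeriv (y : ℝ) : HasDerivAt explicitPartDeriv
    ((2 * y ^ 2 + 1 / 2) * erfDiff y + √(6 / π) * y * rexp (-2 * y ^ 2 / 3)
      - 4 * y * explicitPartDeriv y) y := by
  have hsqrt : √(6 / π) = 2 * √3 / √(2 * π) := by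
    rw [sqrt_div' _ pi_pos.le, sqrt_mul zero_le_two, show (6 : ℝ) = 2 * 3 by norm_num,
      sqrt_mul zero_le_two]
    field_simp
    norm_num
  have hpoly : HasDerivAt (fun y : ℝ ↦ y ^ 2 - 5 / 4) (2 * y) y := by
    simpa using (hasDerivAt_pow 2 y).sub_const (5 / 4)
  have hwide := (hasDerivAt_exp_neg_two_mul_sq_div_three y).const_mul (√3 / 2)
  have hnarrow := hpoly.mul (hasDerivAt_exp_neg_mul_sq 2 y)
  convert! (((hasDerivAt_id y).div_const 2).mul (hasDerivAt_erfDiff y)).add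
    ((hwide.add hnarrow).const_mul (1 / √(2 * π))) using 1
  rw [hsqrt, explicitPartDeriv, id]
  ring

/-! ### The double integral `A₄` -/

lemma hasDerivAt_integral_Iic {E : Type*} [NormedAddCommGroup E] [NormedSpace ℝ E]
    [CompleteSpace E] {f : ℝ → E} (hf : Continuous f)
    (hint : ∀ y, IntegrableOn f (Set.Iic y)) (y : ℝ) :
    HasDerivAt (fun y ↦ ∫ z in Set.Iic y, f z) (f y) y := by
  have hsplit : (fun y ↦ ∫ z in Set.Iic y, f z) =
      fun y ↦ (∫ z in Set.Iic 0, f z) + ∫ z in (0 : ℝ)..y, f z := by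
    ext y
    rw [← intervalIntegral.integral_Iic_sub_Iic (hint 0) (hint y), add_sub_cancel]
  rw [hsplit]
  exact (hf.integral_hasStrictDerivAt 0 y).hasDerivAt.const_add _

lemma integral_Ioi_integral_Ioo_comp_sub {E : Type*} [NormedAddCommGroup E] [NormedSpace ℝ E]
    {f : ℝ → ℝ → E} {y : ℝ}
    (hf : IntegrableOn (Function.uncurry f) (Set.Ioi 0 ×ˢ Set.Iio y)) :
    ∫ t₁ in Set.Ioi 0, ∫ t₂ in Set.Ioo 0 t₁, f (t₁ - t₂) (y - t₂) =
      ∫ z in Set.Iio y, ∫ r in Set.Ioi 0, f r z := by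
  set F := (Set.Ioi 0 ×ˢ Set.Iio y).indicator (Function.uncurry f) with hF
  have hmeas : MeasurableSet (Set.Ioi (0 : ℝ) ×ˢ Set.Iio y) :=
    measurableSet_Ioi.prod measurableSet_Iio
  have hF_int : Integrable F := hf.integrable_indicator hmeas
  have hφ : MeasurePreserving (fun p : ℝ × ℝ ↦ (p.1 - p.2, y - p.2)) :=
    ((MeasurePreserving.id volume).prod (volume.measurePreserving_sub_left y)).comp
      (measurePreserving_sub_prod volume volume)
  have hextend : ∫ t₁ in Set.Ioi 0, ∫ t₂ in Set.Ioo 0 t₁, f (t₁ - t₂) (y - t₂) =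
      ∫ t₁, ∫ t₂, F (t₁ - t₂, y - t₂) := by
    rw [setIntegral_eq_integral_of_forall_compl_eq_zero fun t₁ ht₁ ↦ by
      rw [Set.Ioo_eq_empty ht₁, setIntegral_empty]]
    congr with t₁
    rw [← integral_indicator measurableSet_Ioo]
    congr with t₂
    simp [hF, Set.indicator_apply, and_comm]
  calc
    _ = ∫ t₁, ∫ t₂, F (t₁ - t₂, y - t₂) := hextend
    _ = ∫ p : ℝ × ℝ, F (p.1 - p.2, y - p.2) :=
      integral_integral (hφ.integrable_comp_of_integrable hF_int)
    _ = ∫ p, F p := by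
      rw [← integral_map (f := F) hφ.aemeasurable
        (by rw [hφ.map_eq]; exact hF_int.aestronglyMeasurable), hφ.map_eq]
    _ = ∫ z in Set.Iio y, ∫ r in Set.Ioi 0, f r z := by
      rw [integral_indicator hmeas, Measure.volume_eq_prod, ← Measure.prod_restrict]
      refine integral_prod_symm _ ?_
      rwa [IntegrableOn, Measure.volume_eq_prod, ← Measure.prod_restrict] at hf

/-- The integrand of `A₄` in the coordinates `r = t₁ - t₂`, `z = y - t₂`, with the factor
`e ^ (-2 z ^ 2)` removed. -/
noncomputable def pairKernel (r z : ℝ) : ℝ :=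
  (rexp (4 * r * z - 2 * r ^ 2) * (erf r - erf (√2 * z)) + (erf r - erf (√2 * (r - z)))) / r

/-- The derivative of `pairKernel r` for `r ≠ 0`; it is no longer singular at `r = 0`. -/
noncomputable def pairKernelDeriv (r z : ℝ) : ℝ :=
  4 * (rexp (4 * r * z - 2 * r ^ 2) * (erf r - erf (√2 * z)))

lemma exp_neg_two_mul_sq_mul_exp (r z : ℝ) :
    rexp (-2 * z ^ 2) * rexp (4 * r * z - 2 * r ^ 2) = rexp (-2 * (r - z) ^ 2) := by
  rw [← exp_add]
  ring_nf

lemma exp_mul_pairKernel (t₁ t₂ y : ℝ) :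
    1 / (t₁ - t₂) *
        (rexp (-2 * (t₁ - y) ^ 2) * (erf (t₁ - t₂) + erf (√2 * (t₂ - y))) +
          rexp (-2 * (t₂ - y) ^ 2) * (erf (t₁ - t₂) - erf (√2 * (t₁ - y)))) =
      rexp (-2 * (y - t₂) ^ 2) * pairKernel (t₁ - t₂) (y - t₂) := by
  have hexp := exp_neg_two_mul_sq_mul_exp (t₁ - t₂) (y - t₂)
  rw [sub_sub_sub_cancel_right] at hexp
  rw [pairKernel, ← hexp, ← neg_sub y t₂, mul_neg, erf_neg, neg_sq, sub_sub_sub_cancel_right]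
  ring

lemma measurable_pairKernel : Measurable (Function.uncurry pairKernel) := by
  unfold Function.uncurry pairKernel
  fun_prop

/-- The two Gaussian terms cancel because `e ^ (4rz - 2r²) e ^ (-2z²) = e ^ (-2(r - z)²)`. -/
lemma hasDerivAt_pairKernel {r : ℝ} (hr : r ≠ 0) (z : ℝ) :
    HasDerivAt (pairKernel r) (pairKernelDeriv r z) z := by
  have hexponent : HasDerivAt (fun z ↦ 4 * r * z - 2 * r ^ 2) (4 * r) z :=
    (hasDerivAt_const_mul (4 * r)).sub_const _
  have hshift := (hasDerivAt_erf_const_mul √2 (r - z)).comp_const_sub r z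
  convert! ((hexponent.exp.mul ((hasDerivAt_erf_const_mul √2 z).const_sub (erf r))).add
    (hshift.const_sub (erf r))).div_const r using 1
  rw [mul_pow, mul_pow, sq_sqrt zero_le_two, ← neg_mul 2 (z ^ 2), ← neg_mul 2 ((r - z) ^ 2),
    ← exp_neg_two_mul_sq_mul_exp, pairKernelDeriv]
  field_simp
  ring

lemma abs_pairKernelDeriv_le {r z Y : ℝ} (hr : 0 ≤ r) (hz : z ≤ Y) :
    |pairKernelDeriv r z| ≤ 8 * rexp (4 * r * Y - 2 * r ^ 2) := by
  have hexp : rexp (4 * r * z - 2 * r ^ 2) ≤ rexp (4 * r * Y - 2 * r ^ 2) := by gcongr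
  rw [pairKernelDeriv, abs_mul, abs_mul, abs_exp, Nat.abs_ofNat]
  linarith [mul_le_mul hexp (abs_erf_sub_erf_le_two r (√2 * z)) (abs_nonneg _) (exp_pos _).le]

lemma abs_pairKernel_zero_le {r : ℝ} (hr : 0 < r) : |pairKernel r 0| ≤ 4 * rexp (1 - r) := by
  have hvalue : pairKernel r 0 = (rexp (-2 * r ^ 2) * erf r + (erf r - erf (√2 * r))) / r := by
    rw [pairKernel, mul_zero, mul_zero, erf_zero, sub_zero, sub_zero, zero_sub, neg_mul]
  rw [hvalue, abs_div, abs_of_pos hr, div_le_iff₀ hr]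
  refine (abs_add_le _ _).trans ?_
  rw [abs_mul, abs_exp]
  rcases le_total r 1 with hr1 | hr1
  · have hexp : rexp (-2 * r ^ 2) ≤ 1 := exp_le_one_iff.2 (by nlinarith)
    have hone : 1 ≤ rexp (1 - r) := one_le_exp (sub_nonneg.2 hr1)
    have herf : |erf r| ≤ 2 * r := by
      simpa only [abs_of_pos hr] using abs_erf_le_two_mul_abs r
    have hsub : |erf r - erf (√2 * r)| ≤ 2 * r := by
      refine (abs_erf_sub_erf_le r (√2 * r)).trans ?_
      have habs : |r - √2 * r| ≤ r := abs_le.2 ⟨by nlinarith [sqrt_two_lt_three_halves], by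
        nlinarith [sqrt_nonneg 2]⟩
      linarith
    nlinarith [mul_le_mul hexp herf (abs_nonneg _) zero_le_one]
  · have hexp : rexp (-2 * r ^ 2) ≤ rexp (1 - r) := exp_le_exp.2 (by nlinarith)
    have hsub : |erf r - erf (√2 * r)| ≤ 2 * rexp (1 - r) := by
      have hle : r ≤ √2 * r := le_mul_of_one_le_left hr.le (one_le_sqrt.2 one_le_two)
      have herfc : erfc (√2 * r) ≤ 2 * rexp (1 - r) :=
        (erfc_le_exp_one_sub _).trans (by gcongr)
      simpa [erfc] using abs_sub_le_of_nonneg_of_le (erfc_nonneg (√2 * r)) herfc (erfc_nonneg r)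
        (erfc_le_exp_one_sub r)
    nlinarith [mul_le_mul hexp (abs_erf_le_one r) (abs_nonneg _) (exp_pos _).le, exp_pos (1 - r)]

lemma abs_pairKernel_le {r z Y : ℝ} (hr : 0 < r) (hY : 0 ≤ Y) (hz : z ≤ Y) :
    |pairKernel r z| ≤ 4 * rexp (1 - r) + 8 * rexp (4 * r * Y - 2 * r ^ 2) * |z| := by
  have hdiff : |pairKernel r z - pairKernel r 0| ≤ 8 * rexp (4 * r * Y - 2 * r ^ 2) * |z - 0| :=
    (convex_Iic Y).norm_image_sub_le_of_norm_hasDerivWithin_le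
      (fun x _ ↦ (hasDerivAt_pairKernel hr.ne' x).hasDerivWithinAt)
      (fun x hx ↦ abs_pairKernelDeriv_le hr.le hx) hY hz
  rw [sub_zero] at hdiff
  calc |pairKernel r z| ≤ |pairKernel r 0| + |pairKernel r z - pairKernel r 0| := by
        simpa using abs_add_le (pairKernel r 0) (pairKernel r z - pairKernel r 0)
    _ ≤ _ := add_le_add (abs_pairKernel_zero_le hr) hdiff

lemma integrable_exp_mul_sub_sq (Y : ℝ) : Integrable fun r ↦ rexp (4 * r * Y - 2 * r ^ 2) := by
  refine ((integrable_gaussian two_pos Y).const_mul (rexp (2 * Y ^ 2))).congr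
    (ae_of_all _ fun r ↦ ?_)
  simp only [← exp_add]
  ring_nf

lemma integrableOn_exp_one_sub : IntegrableOn (fun r ↦ rexp (1 - r)) (Set.Ioi 0) := by
  refine IntegrableOn.congr_fun ((integrableOn_exp_neg_Ioi 0).const_mul (rexp 1)) (fun r _ ↦ ?_)
    measurableSet_Ioi
  rw [← exp_add, ← sub_eq_add_neg]

lemma integrableOn_pairKernel (z : ℝ) : IntegrableOn (pairKernel · z) (Set.Ioi 0) := by
  refine ((integrableOn_exp_one_sub.const_mul 4).add
    (((integrable_exp_mul_sub_sq |z|).integrableOn.const_mul 8).mul_const |z|)).mono'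
    (measurable_pairKernel.comp measurable_prodMk_right).aestronglyMeasurable ?_
  filter_upwards [ae_restrict_mem measurableSet_Ioi] with r hr
  exact abs_pairKernel_le hr (abs_nonneg z) (le_abs_self z)

lemma integrableOn_exp_mul_pairKernel (y : ℝ) :
    IntegrableOn (Function.uncurry fun r z ↦ rexp (-2 * z ^ 2) * pairKernel r z)
      (Set.Ioi 0 ×ˢ Set.Iio y) := by
  have habs : Integrable fun z : ℝ ↦ rexp (-2 * z ^ 2) * |z| := by
    refine (integrable_mul_exp_neg_mul_sq two_pos).abs.congr (ae_of_all _ fun z ↦ ?_)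
    simp only [abs_mul, abs_exp, mul_comm]
  have hbound : IntegrableOn (fun p : ℝ × ℝ ↦ 4 * rexp (1 - p.1) * rexp (-2 * p.2 ^ 2) +
      8 * rexp (4 * p.1 * |y| - 2 * p.1 ^ 2) * (rexp (-2 * p.2 ^ 2) * |p.2|))
      (Set.Ioi 0 ×ˢ Set.Iio y) := by
    rw [IntegrableOn, Measure.volume_eq_prod, ← Measure.prod_restrict]
    exact ((integrableOn_exp_one_sub.const_mul 4).mul_prod
      (integrable_exp_neg_mul_sq two_pos).restrict).add
      (((integrable_exp_mul_sub_sq |y|).const_mul 8).restrict.mul_prod habs.restrict)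
  have hmeas : Measurable (Function.uncurry fun r z ↦ rexp (-2 * z ^ 2) * pairKernel r z) :=
    Measurable.mul (by fun_prop) measurable_pairKernel
  refine hbound.mono' hmeas.aestronglyMeasurable ?_
  filter_upwards [ae_restrict_mem (measurableSet_Ioi.prod measurableSet_Iio)] with ⟨r, z⟩ ⟨hr, hz⟩
  have hkernel := abs_pairKernel_le hr (abs_nonneg y) (hz.le.trans (le_abs_self y))
  rw [Function.uncurry_apply_pair, norm_eq_abs, abs_mul, abs_exp]
  linarith [mul_le_mul_of_nonneg_left hkernel (exp_pos (-2 * z ^ 2)).le]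

/-- The inner integral of `A₄` after the change of variables: the density in `z` obtained by
integrating out `r`. -/
noncomputable def pairMarginal (z : ℝ) : ℝ :=
  rexp (-2 * z ^ 2) * ∫ r in Set.Ioi 0, pairKernel r z

lemma integrableOn_pairMarginal (y : ℝ) : IntegrableOn pairMarginal (Set.Iic y) := by
  have hjoint := integrableOn_exp_mul_pairKernel y
  rw [IntegrableOn, Measure.volume_eq_prod, ← Measure.prod_restrict] at hjoint
  have hmarginal := hjoint.integral_prod_right
  simp only [Function.uncurry_apply_pair, integral_const_mul] at hmarginal
  rwa [integrableOn_Iic_iff_integrableOn_Iio]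

lemma hasDerivAt_integral_pairKernel (z : ℝ) :
    HasDerivAt (fun z ↦ ∫ r in Set.Ioi 0, pairKernel r z)
      (∫ r in Set.Ioi 0, pairKernelDeriv r z) z := by
  refine (hasDerivAt_integral_of_dominated_loc_of_deriv_le (s := Set.Iio (z + 1))
    (F := fun z r ↦ pairKernel r z) (F' := fun z r ↦ pairKernelDeriv r z)
    (Iio_mem_nhds (lt_add_one z))
    (Eventually.of_forall fun z ↦ (integrableOn_pairKernel z).aestronglyMeasurable)
    (integrableOn_pairKernel z) ?_ ?_
    ((integrable_exp_mul_sub_sq (z + 1)).const_mul 8).integrableOn ?_).2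
  · unfold pairKernelDeriv
    fun_prop
  · filter_upwards [ae_restrict_mem measurableSet_Ioi] with r hr x hx
    exact abs_pairKernelDeriv_le (le_of_lt hr) (le_of_lt hx)
  · filter_upwards [ae_restrict_mem measurableSet_Ioi] with r hr x _
    exact hasDerivAt_pairKernel (ne_of_gt hr) x

lemma exp_mul_integral_pairKernelDeriv (z : ℝ) :
    rexp (-2 * z ^ 2) * ∫ r in Set.Ioi 0, pairKernelDeriv r z =
      4 * (halfGaussian 2 erf z - erf (√2 * z) * halfGaussian 2 1 z) := by
  have herf := integrable_gaussian_mul two_pos z measurable_erf abs_erf_le_one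
  have hone := integrable_gaussian_mul two_pos z measurable_one fun _ ↦ abs_one.le
  rw [halfGaussian, halfGaussian, ← integral_const_mul, ← integral_const_mul,
    ← integral_sub herf.integrableOn (hone.const_mul _).integrableOn, ← integral_const_mul]
  congr with r
  rw [pairKernelDeriv, ← exp_neg_two_mul_sq_mul_exp, Pi.one_apply]
  ring

lemma hasDerivAt_pairMarginal (z : ℝ) : HasDerivAt pairMarginal
    (4 * (halfGaussian 2 erf z - erf (√2 * z) * halfGaussian 2 1 z) - 4 * z * pairMarginal z)
    z := by
  convert! (hasDerivAt_exp_neg_mul_sq 2 z).mul (hasDerivAt_integral_pairKernel z) using 1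
  rw [exp_mul_integral_pairKernelDeriv, pairMarginal]
  ring

lemma A₄_eq_integral_pairMarginal (y : ℝ) :
    A₄ y = -(1 / √(2 * π)) * ∫ z in Set.Iic y, pairMarginal z := by
  simp only [A₄, exp_mul_pairKernel]
  rw [integral_Ioi_integral_Ioo_comp_sub (integrableOn_exp_mul_pairKernel y),
    integral_Iic_eq_integral_Iio]
  simp only [integral_const_mul, pairMarginal]

lemma hasDerivAt_A₄ (y : ℝ) : HasDerivAt A₄ (-(1 / √(2 * π)) * pairMarginal y) y := by
  have hcont : Continuous pairMarginal :=
    continuous_iff_continuousAt.2 fun z ↦ (hasDerivAt_pairMarginal z).continuousAt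
  rw [funext A₄_eq_integral_pairMarginal]
  exact (hasDerivAt_integral_Iic hcont integrableOn_pairMarginal y).const_mul _

lemma deriv_A₄ : deriv A₄ = fun y ↦ -(1 / √(2 * π)) * pairMarginal y :=
  funext fun y ↦ (hasDerivAt_A₄ y).deriv

lemma hasDerivAt_deriv_A₄ (y : ℝ) : HasDerivAt (deriv A₄)
    (-(4 / √(2 * π)) * (halfGaussian 2 erf y - erf (√2 * y) * halfGaussian 2 1 y)
      - 4 * y * deriv A₄ y) y := by
  rw [deriv_A₄]
  convert! (hasDerivAt_pairMarginal y).const_mul (-(1 / √(2 * π))) using 1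
  ring

lemma oddPart_deriv_deriv_A₄ (y : ℝ) :
    oddPart (deriv (deriv A₄)) y = -erfDiff y - 4 * y * evenPart (deriv A₄) y := by
  have herf := halfGaussian_erf_sub_neg two_pos y
  rw [two_add_one_eq_three] at herf
  have hκ : 4 / √(2 * π) * √(π / 2) = 2 := by
    rw [sqrt_mul zero_le_two, sqrt_div' _ zero_le_two]
    field_simp
    norm_num
  rw [oddPart, (hasDerivAt_deriv_A₄ y).deriv, (hasDerivAt_deriv_A₄ (-y)).deriv, evenPart,
    halfGaussian_one two_pos, halfGaussian_one two_pos, mul_neg, erf_neg, erfDiff]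
  linear_combination -2 / √(2 * π) * herf
    - (erf (√(2 / 3) * y) - erf (√2 * y)) / 2 * hκ

/-- `A_a` is twice differentiable and satisfies the ODE
`A_a'' + 4y A_a' = (2y² − 1/2)(erf(√(2/3) y) − erf(√2 y)) + √(6/π) y e^{−2y²/3}`. -/
theorem Aa_ode :
    (∀ y : ℝ, DifferentiableAt ℝ Aa y) ∧
    (∀ y : ℝ, DifferentiableAt ℝ (deriv Aa) y) ∧
    ∀ y : ℝ,
      deriv (deriv Aa) y + 4 * y * deriv Aa y =
        (2 * y ^ 2 - 1 / 2) * (erf (Real.sqrt (2 / 3) * y) - erf (Real.sqrt 2 * y)) +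
          Real.sqrt (6 / Real.pi) * y * Real.exp (-2 * y ^ 2 / 3) := by
  have hAa (y : ℝ) : HasDerivAt Aa (explicitPartDeriv y + evenPart (deriv A₄) y) y := by
    rw [funext Aa_eq_explicitPart_add_oddPart_A₄]
    exact (hasDerivAt_explicitPart y).add
      (hasDerivAt_oddPart (fun x ↦ (hasDerivAt_A₄ x).differentiableAt.hasDerivAt) y)
  have hderiv : deriv Aa = fun y ↦ explicitPartDeriv y + evenPart (deriv A₄) y :=
    funext fun y ↦ (hAa y).deriv
  have hAa' (y : ℝ) : HasDerivAt (deriv Aa) ((2 * y ^ 2 + 1 / 2) * erfDiff y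
      + √(6 / π) * y * rexp (-2 * y ^ 2 / 3) - 4 * y * explicitPartDeriv y
      + oddPart (deriv (deriv A₄)) y) y := by
    rw [hderiv]
    exact (hasDerivAt_explicitPartDeriv y).add
      (hasDerivAt_evenPart (fun x ↦ (hasDerivAt_deriv_A₄ x).differentiableAt.hasDerivAt) y)
  refine ⟨fun y ↦ (hAa y).differentiableAt, fun y ↦ (hAa' y).differentiableAt, fun y ↦ ?_⟩
  rw [(hAa' y).deriv, (hAa y).deriv, oddPart_deriv_deriv_A₄, erfDiff]
  ring
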